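/- Let c ≥ 0 and let a, b be real numbers with a ≥ 0, b ≥ 0 and a − b = c. Then ℓ(a) + ℓ(b) ≥ ℓ(â) + ℓ(b̂), where â = (c + √(c² + 4))/2 and b̂ = (−c + √(c² + 4))/2. In particular, the infimum of ℓ(a)+ℓ(b) over {a,b ≥ 0 : a − b = c} equals ℓ(â)+ℓ(b̂), attained at (â, b̂), which satisfy â·b̂ = 1 and â − b̂ = c. -/

import Mathlib

noncomputable def ell (z : ℝ) : ℝ := z * Real.log z - z + 1

/-!
The function `ell` is convex on `[0, ∞)` with derivative `log`, so it lies above its tangent lines.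
If `p * q = 1`, the tangents at `p` and `q` have opposite slopes `log p = -log q`; since moving
along the line `a - b = c` changes both coordinates by the same amount, the two linear terms cancel.
-/

open Real InformationTheory

theorem ell_eq_klFun (z : ℝ) : ell z = klFun z := by
  rw [ell, klFun_apply]
  ring

theorem ell_nonneg {z : ℝ} (hz : 0 ≤ z) : 0 ≤ ell z :=
  ell_eq_klFun z ▸ klFun_nonneg hz

theorem mul_ell_div (x : ℝ) {y : ℝ} (hy : y ≠ 0) :
    y * ell (x / y) = ell x - (ell y + (x - y) * log y) := by
  rcases eq_or_ne x 0 with rfl | hx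
  · simp only [ell, zero_div, log_zero]
    ring
  · simp only [ell, log_div hx hy]
    field_simp
    ring

theorem ell_add_sub_mul_log_le {x y : ℝ} (hx : 0 ≤ x) (hy : 0 < y) :
    ell y + (x - y) * log y ≤ ell x := by
  have gap_nonneg : 0 ≤ y * ell (x / y) := mul_nonneg hy.le (ell_nonneg (div_nonneg hx hy.le))
  rwa [mul_ell_div x hy.ne', sub_nonneg] at gap_nonneg

theorem ell_add_ell_le_of_mul_eq_one {a b p q : ℝ} (ha : 0 ≤ a) (hb : 0 ≤ b) (hp : 0 < p)
    (hpq : p * q = 1) (hsub : a - b = p - q) : ell p + ell q ≤ ell a + ell b := by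
  have hq : 0 < q := pos_of_mul_pos_right (hpq ▸ one_pos) hp.le
  have slopes_opposite : log q = -log p := by
    rw [eq_inv_of_mul_eq_one_right hpq, log_inv]
  have same_displacement : b - q = a - p := by linarith
  calc
    ell p + ell q = (ell p + (a - p) * log p) + (ell q + (b - q) * log q) := by
      rw [slopes_opposite, same_displacement]
      ring
    _ ≤ ell a + ell b := add_le_add (ell_add_sub_mul_log_le ha hp) (ell_add_sub_mul_log_le hb hq)

theorem add_sqrt_sq_add_pos (c : ℝ) {d : ℝ} (hd : 0 < d) : 0 < c + √(c ^ 2 + d) :=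
  neg_lt_iff_pos_add.mp (neg_sqrt_lt_of_sq_lt (lt_add_of_pos_right _ hd))

theorem add_sqrt_mul_neg_add_sqrt {c d : ℝ} (h : 0 ≤ c ^ 2 + d) :
    (c + √(c ^ 2 + d)) * (-c + √(c ^ 2 + d)) = d := by
  linear_combination sq_sqrt h

theorem ell_add_ell_min_general (c a b : ℝ) (ha : 0 ≤ a) (hb : 0 ≤ b) (hab : a - b = c) :
    ell ((c + √(c ^ 2 + 4)) / 2) + ell ((-c + √(c ^ 2 + 4)) / 2) ≤ ell a + ell b ∧
      ((c + √(c ^ 2 + 4)) / 2) * ((-c + √(c ^ 2 + 4)) / 2) = 1 ∧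
      ((c + √(c ^ 2 + 4)) / 2) - ((-c + √(c ^ 2 + 4)) / 2) = c := by
  have hpos : 0 < (c + √(c ^ 2 + 4)) / 2 := half_pos (add_sqrt_sq_add_pos c four_pos)
  have hmul : ((c + √(c ^ 2 + 4)) / 2) * ((-c + √(c ^ 2 + 4)) / 2) = 1 := by
    rw [div_mul_div_comm, add_sqrt_mul_neg_add_sqrt (by positivity)]
    norm_num
  have hsub : ((c + √(c ^ 2 + 4)) / 2) - ((-c + √(c ^ 2 + 4)) / 2) = c := by ring
  exact ⟨ell_add_ell_le_of_mul_eq_one ha hb hpos hmul (hab.trans hsub.symm), hmul, hsub⟩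

theorem ell_add_ell_min (c : ℝ) (hc : 0 ≤ c) (a b : ℝ) (ha : 0 ≤ a) (hb : 0 ≤ b)
    (hab : a - b = c) :
    ell ((c + Real.sqrt (c ^ 2 + 4)) / 2) + ell ((-c + Real.sqrt (c ^ 2 + 4)) / 2)
        ≤ ell a + ell b ∧
      ((c + Real.sqrt (c ^ 2 + 4)) / 2) * ((-c + Real.sqrt (c ^ 2 + 4)) / 2) = 1 ∧
      ((c + Real.sqrt (c ^ 2 + 4)) / 2) - ((-c + Real.sqrt (c ^ 2 + 4)) / 2) = c :=
  ell_add_ell_min_general c a b ha hb hab
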